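/- Let L, T > 0. Let u : [0,T] × ℝ → ℝ be smooth, L-periodic in x, with all partial derivatives bounded, solving the Kuramoto–Sivashinsky equation ∂_t u + ∂_x (u²/2) + ∂_x² u + ∂_x⁴ u = 0. Then there exists C > 0 such that for every τ ∈ (0,1] and every C¹ tuple q = (q₀, q₁, q₂, q₃), L-periodic in x, solving ∂_t q₀ + ∂_x (q₀²/2) + q₂ + ∂_x q₃ = 0, τ ∂_t q₁ − (∂_x q₂ − q₃) = 0, τ ∂_t q₂ − (∂_x q₁ − q₂) = 0, τ ∂_t q₃ + (∂_x q₀ − q₁) = 0, with initial data q_j(0,·) = ∂_x^j u(0,·) for j = 0, 1, 2, 3, one has sup_{t ∈ [0,T]} [ ‖u(t) − q₀(t)‖_{L²(0,L)} + Σ_{j=1}^{3} √τ ‖∂_x^j u(t) − q_j(t)‖_{L²(0,L)} ] ≤ C τ. -/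

import Mathlib

open MeasureTheory

/-- Partial derivative with respect to the first (time) variable. -/
noncomputable def pdt (u : ℝ → ℝ → ℝ) : ℝ → ℝ → ℝ :=
  fun t x => deriv (fun s => u s x) t

/-- Partial derivative with respect to the second (space) variable. -/
noncomputable def pdx (u : ℝ → ℝ → ℝ) : ℝ → ℝ → ℝ :=
  fun t x => deriv (fun y => u t y) x

open Function Set

section PartialDerivatives

lemma hasDerivAt_fderiv_fst {v : ℝ → ℝ → ℝ} (hv : Differentiable ℝ (uncurry v)) (t x : ℝ) :
    HasDerivAt (fun s => v s x) (fderiv ℝ (uncurry v) (t, x) (1, 0)) t :=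
  (hv (t, x)).hasFDerivAt.comp_hasDerivAt (f := fun s : ℝ => (s, x)) t
    ((hasDerivAt_id t).prodMk (hasDerivAt_const t x))

lemma hasDerivAt_fderiv_snd {v : ℝ → ℝ → ℝ} (hv : Differentiable ℝ (uncurry v)) (t x : ℝ) :
    HasDerivAt (fun y => v t y) (fderiv ℝ (uncurry v) (t, x) (0, 1)) x :=
  (hv (t, x)).hasFDerivAt.comp_hasDerivAt (f := fun y : ℝ => (t, y)) x
    ((hasDerivAt_const x t).prodMk (hasDerivAt_id x))

lemma hasDerivAt_pdt {v : ℝ → ℝ → ℝ} (hv : ContDiff ℝ 1 (uncurry v)) (t x : ℝ) :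
    HasDerivAt (fun s => v s x) (pdt v t x) t :=
  (hasDerivAt_fderiv_fst (hv.differentiable one_ne_zero) t x).differentiableAt.hasDerivAt

lemma hasDerivAt_pdx {v : ℝ → ℝ → ℝ} (hv : ContDiff ℝ 1 (uncurry v)) (t x : ℝ) :
    HasDerivAt (fun y => v t y) (pdx v t x) x :=
  (hasDerivAt_fderiv_snd (hv.differentiable one_ne_zero) t x).differentiableAt.hasDerivAt

lemma contDiff_pdt {v : ℝ → ℝ → ℝ} {m n : WithTop ℕ∞} (hv : ContDiff ℝ n (uncurry v))
    (hmn : m + 1 ≤ n) : ContDiff ℝ m (uncurry (pdt v)) := by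
  have hd : Differentiable ℝ (uncurry v) :=
    (hv.of_le (le_trans le_add_self hmn)).differentiable one_ne_zero
  have : uncurry (pdt v) = fun p => fderiv ℝ (uncurry v) p (1, 0) :=
    funext fun p => (hasDerivAt_fderiv_fst hd p.1 p.2).deriv
  rw [this]
  exact (hv.fderiv_right hmn).clm_apply contDiff_const

lemma contDiff_pdx {v : ℝ → ℝ → ℝ} {m n : WithTop ℕ∞} (hv : ContDiff ℝ n (uncurry v))
    (hmn : m + 1 ≤ n) : ContDiff ℝ m (uncurry (pdx v)) := by
  have hd : Differentiable ℝ (uncurry v) :=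
    (hv.of_le (le_trans le_add_self hmn)).differentiable one_ne_zero
  have : uncurry (pdx v) = fun p => fderiv ℝ (uncurry v) p (0, 1) :=
    funext fun p => (hasDerivAt_fderiv_snd hd p.1 p.2).deriv
  rw [this]
  exact (hv.fderiv_right hmn).clm_apply contDiff_const

lemma contDiff_pdx_iterate {v : ℝ → ℝ → ℝ} (hv : ContDiff ℝ (⊤ : ℕ∞) (uncurry v)) (j : ℕ) :
    ContDiff ℝ (⊤ : ℕ∞) (uncurry (pdx^[j] v)) := by
  induction j with
  | zero => exact hv
  | succ j ih =>
    rw [iterate_succ_apply']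
    exact contDiff_pdx ih le_rfl

lemma periodic_pdt {v : ℝ → ℝ → ℝ} {L : ℝ} (hv : ∀ t, Periodic (v t) L) (t : ℝ) :
    Periodic (pdt v t) L := fun x => by
  simp only [pdt, fun s => hv s x]

lemma periodic_pdx {v : ℝ → ℝ → ℝ} {L : ℝ} (hv : ∀ t, Periodic (v t) L) (t : ℝ) :
    Periodic (pdx v t) L := fun x => by
  have h : (fun y => v t (y + L)) = v t := funext (hv t)
  change deriv (v t) (x + L) = deriv (v t) x
  rw [← deriv_comp_add_const, h]

lemma periodic_pdx_iterate {v : ℝ → ℝ → ℝ} {L : ℝ} (hv : ∀ t, Periodic (v t) L) (j : ℕ) :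
    ∀ t, Periodic (pdx^[j] v t) L := by
  induction j with
  | zero => exact hv
  | succ j ih =>
    rw [iterate_succ_apply']
    exact periodic_pdx ih

lemma exists_abs_le_of_continuous {v : ℝ → ℝ → ℝ} (hv : Continuous (uncurry v)) (T L : ℝ) :
    ∃ M, ∀ t ∈ Icc 0 T, ∀ x ∈ Icc 0 L, |v t x| ≤ M := by
  obtain ⟨M, hM⟩ := (isCompact_Icc.prod isCompact_Icc).exists_bound_of_continuousOn
    (s := Icc 0 T ×ˢ Icc 0 L) hv.continuousOn
  exact ⟨M, fun t ht x hx => hM (t, x) ⟨ht, hx⟩⟩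

end PartialDerivatives

section Balance

lemma hasDerivAt_integral_of_contDiff {v : ℝ → ℝ → ℝ} (hv : ContDiff ℝ 1 (uncurry v))
    (a b t : ℝ) :
    HasDerivAt (fun s => ∫ x in a..b, v s x) (∫ x in a..b, pdt v t x) t := by
  have hc : Continuous (uncurry (pdt v)) := (contDiff_pdt (m := 0) hv le_rfl).continuous
  obtain ⟨M, hM⟩ := (isCompact_Icc.prod isCompact_uIcc).exists_bound_of_continuousOn
    (s := Icc (t - 1) (t + 1) ×ˢ uIcc a b) hc.continuousOn
  refine (intervalIntegral.hasDerivAt_integral_of_dominated_loc_of_deriv_le (bound := fun _ => M)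
    (F := v) (F' := pdt v) (Icc_mem_nhds (sub_one_lt t) (lt_add_one t)) (.of_forall fun s => ?_)
    ?_ ?_ ?_ intervalIntegrable_const ?_).2
  · exact (hv.continuous.comp (Continuous.prodMk_right s)).aestronglyMeasurable
  · exact (hv.continuous.comp (Continuous.prodMk_right t)).intervalIntegrable _ _
  · exact (hc.comp (Continuous.prodMk_right t)).aestronglyMeasurable
  · exact .of_forall fun x hx s hs => hM (s, x) ⟨hs, uIoc_subset_uIcc hx⟩
  · exact .of_forall fun x _ s _ => hasDerivAt_pdt hv s x

lemma integral_pdx_eq_zero {F : ℝ → ℝ → ℝ} {L : ℝ} (hF : ContDiff ℝ 1 (uncurry F))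
    (hper : ∀ t, Periodic (F t) L) (t : ℝ) : ∫ x in (0:ℝ)..L, pdx F t x = 0 := by
  have hc : Continuous (uncurry (pdx F)) := (contDiff_pdx (m := 0) hF le_rfl).continuous
  rw [intervalIntegral.integral_eq_sub_of_hasDerivAt (fun x _ => hasDerivAt_pdx hF t x)
    ((hc.comp (Continuous.prodMk_right t)).intervalIntegrable _ _), (hper t).eq, sub_self]

/-- Grönwall estimate for a density satisfying a balance law with periodic flux. -/
lemma integral_le_of_balance {η F : ℝ → ℝ → ℝ} {L T K c : ℝ} (hL : 0 ≤ L)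
    (hη : ContDiff ℝ 1 (uncurry η)) (hF : ContDiff ℝ 1 (uncurry F))
    (hper : ∀ t, Periodic (F t) L)
    (h : ∀ t ∈ Icc 0 T, ∀ x ∈ Icc 0 L, pdt η t x ≤ pdx F t x + K * (η t x + c))
    {t : ℝ} (ht : t ∈ Icc 0 T) :
    (∫ x in (0:ℝ)..L, η t x) + L * c ≤
      Real.exp (K * t) * ((∫ x in (0:ℝ)..L, η 0 x) + L * c) := by
  set Φ : ℝ → ℝ := fun s => ∫ x in (0:ℝ)..L, η s x with hΦ
  have hΦ' (s : ℝ) : HasDerivAt Φ (∫ x in (0:ℝ)..L, pdt η s x) s :=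
    hasDerivAt_integral_of_contDiff hη 0 L s
  have slice {v : ℝ → ℝ → ℝ} (hv : Continuous (uncurry v)) (s : ℝ) :
      IntervalIntegrable (v s) volume 0 L :=
    (hv.comp (Continuous.prodMk_right s)).intervalIntegrable _ _
  have hle (s : ℝ) (hs : s ∈ Icc 0 T) : ∫ x in (0:ℝ)..L, pdt η s x ≤ K * (Φ s + L * c) := by
    have iη := slice hη.continuous s
    have iF := slice (contDiff_pdx (m := 0) hF le_rfl).continuous s
    have iK : IntervalIntegrable (fun x => K * (η s x + c)) volume 0 L :=
      (iη.add intervalIntegrable_const).const_mul K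
    calc ∫ x in (0:ℝ)..L, pdt η s x
        ≤ ∫ x in (0:ℝ)..L, (pdx F s x + K * (η s x + c)) :=
          intervalIntegral.integral_mono_on hL
            (slice (contDiff_pdt (m := 0) hη le_rfl).continuous s) (iF.add iK) (h s hs)
      _ = K * (Φ s + L * c) := by
          rw [intervalIntegral.integral_add iF iK, integral_pdx_eq_zero hF hper,
            intervalIntegral.integral_const_mul,
            intervalIntegral.integral_add iη intervalIntegrable_const]
          simp [hΦ]
  have hG (s : ℝ) : HasDerivAt (fun s => Real.exp (-(K * s)) * (Φ s + L * c))
      (Real.exp (-(K * s)) * ((∫ x in (0:ℝ)..L, pdt η s x) - K * (Φ s + L * c))) s := by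
    have := (((hasDerivAt_id s).const_mul K).neg.exp).mul ((hΦ' s).add_const (L * c))
    refine this.congr_deriv ?_
    simp
    ring
  have hanti : AntitoneOn (fun s => Real.exp (-(K * s)) * (Φ s + L * c)) (Icc 0 T) := by
    refine antitoneOn_of_deriv_nonpos (convex_Icc 0 T)
      (fun s _ => (hG s).continuousAt.continuousWithinAt)
      (fun s _ => (hG s).differentiableAt.differentiableWithinAt) fun s hs => ?_
    rw [(hG s).deriv]
    exact mul_nonpos_of_nonneg_of_nonpos (Real.exp_pos _).le
      (sub_nonpos.2 (hle s (interior_subset hs)))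
  have h0 := hanti ⟨le_rfl, ht.1.trans ht.2⟩ ht ht.1
  simp only [mul_zero, neg_zero, Real.exp_zero, one_mul] at h0
  calc Φ t + L * c = Real.exp (K * t) * (Real.exp (-(K * t)) * (Φ t + L * c)) := by
        rw [← mul_assoc, ← Real.exp_add]; simp
    _ ≤ _ := by gcongr

end Balance

section Energy

lemma energy_source_le {τ M a b c d w g₀ g₁ g₂ g₃ : ℝ} (hτ : τ ∈ Ioc (0:ℝ) 1)
    (hw : |w| ≤ M) (h₀ : |g₀| ≤ M) (h₁ : |g₁| ≤ M) (h₂ : |g₂| ≤ M) (h₃ : |g₃| ≤ M) :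
    -w * a ^ 2 - 2 * a * c - 2 * c ^ 2 + 2 * a * (τ * g₀) + 2 * b * (τ ^ 2 * g₁)
        + 2 * c * (τ * g₂) + 2 * d * (τ ^ 2 * g₃)
      ≤ (M + 2 + 4 * M ^ 2) * (a ^ 2 + τ * (b ^ 2 + c ^ 2 + d ^ 2) + τ ^ 2) := by
  obtain ⟨hτ0, hτ1⟩ := hτ
  have hM : 0 ≤ M := (abs_nonneg w).trans hw
  have sq {g : ℝ} (hg : |g| ≤ M) : τ ^ 2 * g ^ 2 ≤ τ ^ 2 * M ^ 2 := by
    gcongr 1; exact sq_le_sq' (abs_le.1 hg).1 (abs_le.1 hg).2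
  have cube {g : ℝ} (hg : |g| ≤ M) : τ * (τ ^ 2 * g ^ 2) ≤ τ ^ 2 * M ^ 2 :=
    (mul_le_of_le_one_left (by positivity) hτ1).trans (sq hg)
  have e₁ : -w * a ^ 2 ≤ M * a ^ 2 := by gcongr; linarith [(abs_le.1 hw).1]
  have e₂ : -2 * a * c ≤ a ^ 2 + c ^ 2 := by nlinarith [sq_nonneg (a + c)]
  have e₃ : 2 * a * (τ * g₀) ≤ a ^ 2 + τ ^ 2 * M ^ 2 := by
    nlinarith [sq_nonneg (a - τ * g₀), sq h₀]
  have e₄ : 2 * c * (τ * g₂) ≤ c ^ 2 + τ ^ 2 * M ^ 2 := by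
    nlinarith [sq_nonneg (c - τ * g₂), sq h₂]
  have e₅ : 2 * b * (τ ^ 2 * g₁) ≤ τ * b ^ 2 + τ ^ 2 * M ^ 2 := by
    nlinarith [mul_nonneg hτ0.le (sq_nonneg (b - τ * g₁)), cube h₁]
  have e₆ : 2 * d * (τ ^ 2 * g₃) ≤ τ * d ^ 2 + τ ^ 2 * M ^ 2 := by
    nlinarith [mul_nonneg hτ0.le (sq_nonneg (d - τ * g₃)), cube h₃]
  have p₁ : 0 ≤ τ * b ^ 2 := by positivity
  have p₂ : 0 ≤ τ * c ^ 2 := by positivity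
  have p₃ : 0 ≤ τ * d ^ 2 := by positivity
  have p₄ : 0 ≤ 4 * M ^ 2 * (a ^ 2 + τ * (b ^ 2 + c ^ 2 + d ^ 2)) := by positivity
  have p₅ : 0 ≤ M * (τ * (b ^ 2 + c ^ 2 + d ^ 2)) := by positivity
  have p₆ : 0 ≤ (M + 2) * τ ^ 2 := by positivity
  nlinarith

/-- Energy estimate for the error equations of the hyperbolic approximation. -/
lemma hyperbolic_energy_le {L T τ M : ℝ} (hL : 0 ≤ L) (hτ : τ ∈ Ioc (0:ℝ) 1)
    {a b c d w g₀ g₁ g₂ g₃ : ℝ → ℝ → ℝ}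
    (ha : ContDiff ℝ 1 (uncurry a)) (hb : ContDiff ℝ 1 (uncurry b))
    (hc : ContDiff ℝ 1 (uncurry c)) (hd : ContDiff ℝ 1 (uncurry d))
    (hw : ContDiff ℝ 1 (uncurry w))
    (pa : ∀ t, Periodic (a t) L) (pb : ∀ t, Periodic (b t) L) (pc : ∀ t, Periodic (c t) L)
    (pd : ∀ t, Periodic (d t) L) (pw : ∀ t, Periodic (w t) L)
    (ea : ∀ t ∈ Icc 0 T, ∀ x, pdt a t x + (pdx a t x * w t x + a t x * pdx w t x
      + a t x * pdx a t x) + c t x + pdx d t x = τ * g₀ t x)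
    (eb : ∀ t ∈ Icc 0 T, ∀ x, τ * pdt b t x - (pdx c t x - d t x) = τ ^ 2 * g₁ t x)
    (ec : ∀ t ∈ Icc 0 T, ∀ x, τ * pdt c t x - (pdx b t x - c t x) = τ * g₂ t x)
    (ed : ∀ t ∈ Icc 0 T, ∀ x, τ * pdt d t x + (pdx a t x - b t x) = τ ^ 2 * g₃ t x)
    (bw : ∀ t ∈ Icc 0 T, ∀ x ∈ Icc 0 L, |pdx w t x| ≤ M)
    (b₀ : ∀ t ∈ Icc 0 T, ∀ x ∈ Icc 0 L, |g₀ t x| ≤ M)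
    (b₁ : ∀ t ∈ Icc 0 T, ∀ x ∈ Icc 0 L, |g₁ t x| ≤ M)
    (b₂ : ∀ t ∈ Icc 0 T, ∀ x ∈ Icc 0 L, |g₂ t x| ≤ M)
    (b₃ : ∀ t ∈ Icc 0 T, ∀ x ∈ Icc 0 L, |g₃ t x| ≤ M) {t : ℝ} (ht : t ∈ Icc 0 T) :
    (∫ x in (0:ℝ)..L, (a t x ^ 2 + τ * (b t x ^ 2 + c t x ^ 2 + d t x ^ 2))) + L * τ ^ 2 ≤
      Real.exp ((M + 2 + 4 * M ^ 2) * t) *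
        ((∫ x in (0:ℝ)..L, (a 0 x ^ 2 + τ * (b 0 x ^ 2 + c 0 x ^ 2 + d 0 x ^ 2))) + L * τ ^ 2) := by
  refine integral_le_of_balance
    (η := fun t x => a t x ^ 2 + τ * (b t x ^ 2 + c t x ^ 2 + d t x ^ 2))
    (F := fun t x => -(w t x * a t x ^ 2) - 2 / 3 * a t x ^ 3 - 2 * (a t x * d t x)
      + 2 * (b t x * c t x)) hL ?_ ?_ ?_ ?_ ht
  · exact (ha.pow 2).add (contDiff_const.mul (((hb.pow 2).add (hc.pow 2)).add (hd.pow 2)))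
  · exact ((((hw.mul (ha.pow 2)).neg.sub (contDiff_const.mul (ha.pow 3))).sub
      (contDiff_const.mul (ha.mul hd))).add (contDiff_const.mul (hb.mul hc)))
  · intro t x
    simp only [(pa t) x, (pb t) x, (pc t) x, (pd t) x, (pw t) x]
  · intro t ht x hx
    have dη := ((hasDerivAt_pdt ha t x).pow 2).add
      (((((hasDerivAt_pdt hb t x).pow 2).add ((hasDerivAt_pdt hc t x).pow 2)).add
        ((hasDerivAt_pdt hd t x).pow 2)).const_mul τ)
    have dF := (((((hasDerivAt_pdx hw t x).mul ((hasDerivAt_pdx ha t x).pow 2)).neg.sub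
      (((hasDerivAt_pdx ha t x).pow 3).const_mul (2 / 3))).sub
      (((hasDerivAt_pdx ha t x).mul (hasDerivAt_pdx hd t x)).const_mul 2))).add
      (((hasDerivAt_pdx hb t x).mul (hasDerivAt_pdx hc t x)).const_mul 2)
    have hη := dη.deriv
    have hF := dF.deriv
    refine (hη.trans_le ?_).trans (add_le_add_left (hF.ge) _)
    have key := energy_source_le (a := a t x) (b := b t x) (c := c t x) (d := d t x) hτ
      (bw t ht x hx) (b₀ t ht x hx) (b₁ t ht x hx) (b₂ t ht x hx) (b₃ t ht x hx)
    refine le_trans (le_of_eq ?_) (add_le_add_right key _)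
    simp only [Pi.pow_apply, Nat.cast_ofNat]
    linear_combination 2 * a t x * ea t ht x + 2 * b t x * eb t ht x + 2 * c t x * ec t ht x
      + 2 * d t x * ed t ht x

lemma pdx_sq_div_two {v : ℝ → ℝ → ℝ} (hv : ContDiff ℝ 1 (uncurry v)) (t x : ℝ) :
    pdx (fun s y => v s y ^ 2 / 2) t x = v t x * pdx v t x := by
  refine ((((hasDerivAt_pdx hv t x).pow 2).div_const 2).deriv).trans ?_
  simp only [Nat.cast_ofNat]
  ring

lemma mul_sqrt_integral_le {g η : ℝ → ℝ} {L τ σ R : ℝ} (hL : 0 ≤ L) (hτ : 0 ≤ τ) (hσ : 0 ≤ σ)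
    (hg : Continuous g) (hη : Continuous η) (h : ∀ x ∈ Icc 0 L, σ * g x ^ 2 ≤ η x)
    (hR : ∫ x in (0:ℝ)..L, η x ≤ R * τ ^ 2) :
    √σ * √(∫ x in (0:ℝ)..L, g x ^ 2) ≤ √R * τ := by
  rw [← Real.sqrt_mul hσ, ← intervalIntegral.integral_const_mul]
  refine (Real.sqrt_le_sqrt ((intervalIntegral.integral_mono_on hL ?_ ?_ h).trans hR)).trans ?_
  · exact ((hg.pow 2).const_mul σ).intervalIntegrable _ _
  · exact hη.intervalIntegrable _ _
  · rw [Real.sqrt_mul' _ (sq_nonneg τ), Real.sqrt_sq hτ]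

end Energy

/-- Convergence of the hyperbolic approximation to the Kuramoto–Sivashinsky
equation `∂_t u + ∂_x (u²/2) + ∂_x² u + ∂_x⁴ u = 0` (Theorem 3.4 of the paper,
for classical solutions of the hyperbolic approximation). -/
theorem kuramoto_sivashinsky_hyperbolic_convergence
    (L T : ℝ) (hL : 0 < L) (hT : 0 < T)
    (u : ℝ → ℝ → ℝ) (hu : ContDiff ℝ (⊤ : ℕ∞) (Function.uncurry u))
    (huper : ∀ t, Function.Periodic (u t) L)
    (hubd : ∀ i j : ℕ, ∃ M, ∀ t x : ℝ, |pdt^[i] (pdx^[j] u) t x| ≤ M)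
    (hueq : ∀ t ∈ Set.Icc (0:ℝ) T, ∀ x : ℝ,
      pdt u t x + pdx (fun s y => u s y ^ 2 / 2) t x
        + pdx^[2] u t x + pdx^[4] u t x = 0) :
    ∃ C > 0, ∀ τ ∈ Set.Ioc (0:ℝ) 1, ∀ q₀ q₁ q₂ q₃ : ℝ → ℝ → ℝ,
      ContDiff ℝ 1 (Function.uncurry q₀) →
      ContDiff ℝ 1 (Function.uncurry q₁) →
      ContDiff ℝ 1 (Function.uncurry q₂) →
      ContDiff ℝ 1 (Function.uncurry q₃) →
      (∀ t, Function.Periodic (q₀ t) L) →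
      (∀ t, Function.Periodic (q₁ t) L) →
      (∀ t, Function.Periodic (q₂ t) L) →
      (∀ t, Function.Periodic (q₃ t) L) →
      (∀ t ∈ Set.Icc (0:ℝ) T, ∀ x : ℝ,
        pdt q₀ t x + pdx (fun s y => q₀ s y ^ 2 / 2) t x
          + q₂ t x + pdx q₃ t x = 0) →
      (∀ t ∈ Set.Icc (0:ℝ) T, ∀ x : ℝ,
        τ * pdt q₁ t x - (pdx q₂ t x - q₃ t x) = 0) →
      (∀ t ∈ Set.Icc (0:ℝ) T, ∀ x : ℝ,
        τ * pdt q₂ t x - (pdx q₁ t x - q₂ t x) = 0) →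
      (∀ t ∈ Set.Icc (0:ℝ) T, ∀ x : ℝ,
        τ * pdt q₃ t x + (pdx q₀ t x - q₁ t x) = 0) →
      (∀ x : ℝ, q₀ 0 x = u 0 x) →
      (∀ x : ℝ, q₁ 0 x = pdx u 0 x) →
      (∀ x : ℝ, q₂ 0 x = pdx^[2] u 0 x) →
      (∀ x : ℝ, q₃ 0 x = pdx^[3] u 0 x) →
      ∀ t ∈ Set.Icc (0:ℝ) T,
        Real.sqrt (∫ x in (0:ℝ)..L, (u t x - q₀ t x) ^ 2)
          + Real.sqrt τ * Real.sqrt (∫ x in (0:ℝ)..L, (pdx u t x - q₁ t x) ^ 2)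
          + Real.sqrt τ * Real.sqrt (∫ x in (0:ℝ)..L, (pdx^[2] u t x - q₂ t x) ^ 2)
          + Real.sqrt τ * Real.sqrt (∫ x in (0:ℝ)..L, (pdx^[3] u t x - q₃ t x) ^ 2)
          ≤ C * τ := by
  set r₁ : ℝ → ℝ → ℝ := pdt (pdx u) with hr₁
  set r₂ : ℝ → ℝ → ℝ := pdt (pdx^[2] u) with hr₂
  set r₃ : ℝ → ℝ → ℝ := pdt (pdx^[3] u) with hr₃
  have hone : (1 : WithTop ℕ∞) ≤ ((⊤ : ℕ∞) : WithTop ℕ∞) := by exact_mod_cast le_top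
  have su (j : ℕ) : ContDiff ℝ (⊤ : ℕ∞) (uncurry (pdx^[j] u)) := contDiff_pdx_iterate hu j
  have cu (j : ℕ) : ContDiff ℝ 1 (uncurry (pdx^[j] u)) := (su j).of_le hone
  have su₁ : ContDiff ℝ (⊤ : ℕ∞) (uncurry r₁) := contDiff_pdt (su 1) le_rfl
  have su₂ : ContDiff ℝ (⊤ : ℕ∞) (uncurry r₂) := contDiff_pdt (su 2) le_rfl
  have su₃ : ContDiff ℝ (⊤ : ℕ∞) (uncurry r₃) := contDiff_pdt (su 3) le_rfl
  have c₁ : ContDiff ℝ 1 (uncurry r₁) := su₁.of_le hone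
  have c₃ : ContDiff ℝ 1 (uncurry r₃) := su₃.of_le hone
  have pu (j : ℕ) : ∀ t, Periodic (pdx^[j] u t) L := periodic_pdx_iterate huper j
  have per₁ : ∀ t, Periodic (r₁ t) L := periodic_pdt (pu 1)
  have per₃ : ∀ t, Periodic (r₃ t) L := periodic_pdt (pu 3)
  obtain ⟨Mw, hMw⟩ := exists_abs_le_of_continuous (su 1).continuous T L
  obtain ⟨M₁, hM₁⟩ := exists_abs_le_of_continuous su₁.continuous T L
  obtain ⟨M₃, hM₃⟩ := exists_abs_le_of_continuous su₃.continuous T L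
  obtain ⟨N₀, hN₀⟩ := exists_abs_le_of_continuous
    (v := pdx r₁) (contDiff_pdx (m := 0) c₁ le_rfl).continuous T L
  obtain ⟨N₁, hN₁⟩ := exists_abs_le_of_continuous
    (v := fun t x => -pdt r₃ t x) (contDiff_pdt (m := 0) c₃ le_rfl).continuous.neg T L
  obtain ⟨N₂, hN₂⟩ := exists_abs_le_of_continuous (v := fun t x => pdx r₃ t x - r₂ t x)
    ((contDiff_pdx (m := 0) c₃ le_rfl).continuous.sub su₂.continuous) T L
  obtain ⟨N₃, hN₃⟩ := exists_abs_le_of_continuous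
    (v := pdt r₁) (contDiff_pdt (m := 0) c₁ le_rfl).continuous T L
  obtain ⟨M, hM⟩ := (Set.toFinite {Mw, M₁, M₃, N₀, N₁, N₂, N₃}).bddAbove
  simp only [mem_upperBounds, Set.mem_insert_iff, Set.mem_singleton_iff, forall_eq_or_imp,
    forall_eq] at hM
  obtain ⟨lw, l₁, l₃, k₀, k₁, k₂, k₃⟩ := hM
  set K : ℝ := M + 2 + 4 * M ^ 2
  have hM0 : 0 ≤ M :=
    (abs_nonneg _).trans ((hM₁ 0 ⟨le_rfl, hT.le⟩ 0 ⟨le_rfl, hL.le⟩).trans l₁)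
  set D : ℝ := Real.exp (K * T) * (L * (2 * M ^ 2 + 1)) with hD
  set R : ℝ := 2 * D + L * (2 * M ^ 2) with hR
  have hRpos : 0 < R := by positivity
  refine ⟨4 * √R, by positivity, ?_⟩
  intro τ hτ q₀ q₁ q₂ q₃ s₀ s₁ s₂ s₃ p₀ p₁ p₂ p₃ e₀ e₁ e₂ e₃ i₀ i₁ i₂ i₃ t ht
  obtain ⟨hτ0, hτ1⟩ := id hτ
  set a : ℝ → ℝ → ℝ := fun t x => q₀ t x - u t x with ha
  set b : ℝ → ℝ → ℝ := fun t x => q₁ t x - (pdx u t x + τ * r₃ t x) with hb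
  set c : ℝ → ℝ → ℝ := fun t x => q₂ t x - pdx^[2] u t x with hc
  set d : ℝ → ℝ → ℝ := fun t x => q₃ t x - (pdx^[3] u t x - τ * r₁ t x) with hd
  have sa : ContDiff ℝ 1 (uncurry a) := s₀.sub (cu 0)
  have sb : ContDiff ℝ 1 (uncurry b) := s₁.sub ((cu 1).add (contDiff_const.mul c₃))
  have sc : ContDiff ℝ 1 (uncurry c) := s₂.sub (cu 2)
  have sd : ContDiff ℝ 1 (uncurry d) := s₃.sub ((cu 3).sub (contDiff_const.mul c₁))
  have energy := hyperbolic_energy_le (a := a) (b := b) (c := c) (d := d) (w := u) (T := T)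
    (g₀ := pdx r₁) (g₁ := fun t x => -pdt r₃ t x) (g₂ := fun t x => pdx r₃ t x - r₂ t x)
    (g₃ := pdt r₁) hL.le hτ sa sb sc sd (cu 0)
    (fun t => (p₀ t).sub (huper t))
    (fun t x => by simp only [hb, p₁ t x, per₃ t x, periodic_pdx huper t x])
    (fun t => (p₂ t).sub (pu 2 t))
    (fun t x => by simp only [hd, p₃ t x, pu 3 t x, per₁ t x])
    huper
    (fun t ht x => by
      have ta : pdt a t x = _ := ((hasDerivAt_pdt s₀ t x).sub (hasDerivAt_pdt (cu 0) t x)).deriv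
      have xa : pdx a t x = _ := ((hasDerivAt_pdx s₀ t x).sub (hasDerivAt_pdx (cu 0) t x)).deriv
      have xd : pdx d t x = _ := ((hasDerivAt_pdx s₃ t x).sub ((hasDerivAt_pdx (cu 3) t x).sub
        ((hasDerivAt_pdx c₁ t x).const_mul τ))).deriv
      have hq := e₀ t ht x
      have hu' := hueq t ht x
      rw [pdx_sq_div_two s₀] at hq
      rw [pdx_sq_div_two (v := u) (cu 0)] at hu'
      rw [ta, xa, xd]
      simp only [iterate_zero, id_eq, ha, hc, iterate_succ_apply'] at hu' ⊢
      linear_combination hq - hu')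
    (fun t ht x => by
      have tb : pdt b t x = _ := ((hasDerivAt_pdt s₁ t x).sub ((hasDerivAt_pdt (cu 1) t x).add
        ((hasDerivAt_pdt c₃ t x).const_mul τ))).deriv
      have xc : pdx c t x = _ := ((hasDerivAt_pdx s₂ t x).sub (hasDerivAt_pdx (cu 2) t x)).deriv
      rw [tb, xc]
      simp only [iterate_zero, id_eq, hd, hr₁, iterate_succ_apply']
      linear_combination e₁ t ht x)
    (fun t ht x => by
      have tc : pdt c t x = _ := ((hasDerivAt_pdt s₂ t x).sub (hasDerivAt_pdt (cu 2) t x)).deriv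
      have xb : pdx b t x = _ := ((hasDerivAt_pdx s₁ t x).sub ((hasDerivAt_pdx (cu 1) t x).add
        ((hasDerivAt_pdx c₃ t x).const_mul τ))).deriv
      rw [tc, xb]
      simp only [iterate_zero, id_eq, hc, hr₂, iterate_succ_apply']
      linear_combination e₂ t ht x)
    (fun t ht x => by
      have td : pdt d t x = _ := ((hasDerivAt_pdt s₃ t x).sub ((hasDerivAt_pdt (cu 3) t x).sub
        ((hasDerivAt_pdt c₁ t x).const_mul τ))).deriv
      have xa : pdx a t x = _ := ((hasDerivAt_pdx s₀ t x).sub (hasDerivAt_pdx (cu 0) t x)).deriv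
      rw [td, xa]
      simp only [iterate_zero, id_eq, hb, hr₃, iterate_succ_apply']
      linear_combination e₃ t ht x)
    (fun t ht x hx => (hMw t ht x hx).trans lw)
    (fun t ht x hx => (hN₀ t ht x hx).trans k₀)
    (fun t ht x hx => (hN₁ t ht x hx).trans k₁)
    (fun t ht x hx => (hN₂ t ht x hx).trans k₂)
    (fun t ht x hx => (hN₃ t ht x hx).trans k₃) ht
  have slice {v : ℝ → ℝ → ℝ} (hv : ContDiff ℝ 1 (uncurry v)) (s : ℝ) : Continuous (v s) :=
    hv.continuous.comp (Continuous.prodMk_right s)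
  have cη (s : ℝ) : Continuous fun x => a s x ^ 2 + τ * (b s x ^ 2 + c s x ^ 2 + d s x ^ 2) :=
    ((slice sa s).pow 2).add (((((slice sb s).pow 2).add ((slice sc s).pow 2)).add
      ((slice sd s).pow 2)).const_mul τ)
  have sqM {y N : ℝ} (hy : |y| ≤ N) (hN : N ≤ M) : y ^ 2 ≤ M ^ 2 :=
    sq_le_sq' (abs_le.1 (hy.trans hN)).1 (abs_le.1 (hy.trans hN)).2
  have initial_le : ∫ x in (0:ℝ)..L, (a 0 x ^ 2 + τ * (b 0 x ^ 2 + c 0 x ^ 2 + d 0 x ^ 2)) ≤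
      L * (2 * M ^ 2 * τ ^ 2) := by
    have h0 : (0:ℝ) ∈ Icc 0 T := ⟨le_rfl, hT.le⟩
    calc _ ≤ ∫ x in (0:ℝ)..L, 2 * M ^ 2 * τ ^ 2 := by
          refine intervalIntegral.integral_mono_on hL.le ((cη 0).intervalIntegrable _ _)
            intervalIntegrable_const fun x hx => ?_
          have m₁ := sqM (hM₁ 0 h0 x hx) l₁
          have m₃ := sqM (hM₃ 0 h0 x hx) l₃
          simp only [ha, hb, hc, hd, i₀, i₁, i₂, i₃]
          calc _ = τ * (τ ^ 2 * (r₃ 0 x ^ 2 + r₁ 0 x ^ 2)) := by ring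
            _ ≤ 1 * (τ ^ 2 * (M ^ 2 + M ^ 2)) := by gcongr
            _ = _ := by ring
      _ = _ := by rw [intervalIntegral.integral_const, smul_eq_mul, sub_zero]
  have hE : ∫ x in (0:ℝ)..L, (a t x ^ 2 + τ * (b t x ^ 2 + c t x ^ 2 + d t x ^ 2)) ≤
      D * τ ^ 2 := by
    calc _ ≤ _ := le_add_of_nonneg_right (by positivity : 0 ≤ L * τ ^ 2)
      _ ≤ _ := energy
      _ ≤ Real.exp (K * T) * (L * (2 * M ^ 2 * τ ^ 2) + L * τ ^ 2) := by
          have : K * t ≤ K * T := mul_le_mul_of_nonneg_left ht.2 (by positivity)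
          have : 0 ≤ ∫ x in (0:ℝ)..L, (a 0 x ^ 2 + τ * (b 0 x ^ 2 + c 0 x ^ 2 + d 0 x ^ 2)) :=
            intervalIntegral.integral_nonneg hL.le fun x _ => by positivity
          gcongr
      _ = D * τ ^ 2 := by rw [hD]; ring
  have hR' : ∫ x in (0:ℝ)..L, (2 * (a t x ^ 2 + τ * (b t x ^ 2 + c t x ^ 2 + d t x ^ 2))
      + 2 * M ^ 2 * τ ^ 2) ≤ R * τ ^ 2 := by
    rw [intervalIntegral.integral_add (((cη t).const_mul 2).intervalIntegrable _ _)
      intervalIntegrable_const, intervalIntegral.integral_const_mul,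
      intervalIntegral.integral_const, smul_eq_mul, hR]
    linarith
  have cη' : Continuous fun x => 2 * (a t x ^ 2 + τ * (b t x ^ 2 + c t x ^ 2 + d t x ^ 2))
      + 2 * M ^ 2 * τ ^ 2 := ((cη t).const_mul 2).add continuous_const
  have corr {y r N : ℝ} (hr : |r| ≤ N) (hN : N ≤ M) :
      τ * (y + τ * r) ^ 2 ≤ 2 * (τ * y ^ 2) + 2 * M ^ 2 * τ ^ 2 := by
    calc τ * (y + τ * r) ^ 2 ≤ τ * (2 * y ^ 2 + 2 * (τ ^ 2 * r ^ 2)) := by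
          gcongr; nlinarith [sq_nonneg (y - τ * r)]
      _ = 2 * (τ * y ^ 2) + 2 * (τ * (τ ^ 2 * r ^ 2)) := by ring
      _ ≤ 2 * (τ * y ^ 2) + 2 * (1 * (τ ^ 2 * M ^ 2)) := by
          have := sqM hr hN
          gcongr
      _ = _ := by ring
  have b₀ : √1 * √(∫ x in (0:ℝ)..L, (u t x - q₀ t x) ^ 2) ≤ √R * τ := by
    refine mul_sqrt_integral_le hL.le hτ0.le zero_le_one ((slice (cu 0) t).sub (slice s₀ t)) cη'
      (fun x _ => ?_) hR'
    have : 1 * (u t x - q₀ t x) ^ 2 = a t x ^ 2 := by simp only [ha]; ring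
    rw [this]
    have : 0 ≤ a t x ^ 2 + 2 * (τ * (b t x ^ 2 + c t x ^ 2 + d t x ^ 2))
      + 2 * M ^ 2 * τ ^ 2 := by positivity
    linarith
  have b₁ : √τ * √(∫ x in (0:ℝ)..L, (pdx u t x - q₁ t x) ^ 2) ≤ √R * τ := by
    refine mul_sqrt_integral_le hL.le hτ0.le hτ0.le ((slice (cu 1) t).sub (slice s₁ t)) cη'
      (fun x hx => ?_) hR'
    have h := corr (y := b t x) (hM₃ t ht x hx) l₃
    have : (pdx u t x - q₁ t x) ^ 2 = (b t x + τ * r₃ t x) ^ 2 := by simp only [hb]; ring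
    rw [this]
    have : 0 ≤ a t x ^ 2 + τ * c t x ^ 2 + τ * d t x ^ 2 := by positivity
    linarith
  have b₂ : √τ * √(∫ x in (0:ℝ)..L, (pdx^[2] u t x - q₂ t x) ^ 2) ≤ √R * τ := by
    refine mul_sqrt_integral_le hL.le hτ0.le hτ0.le ((slice (cu 2) t).sub (slice s₂ t)) cη'
      (fun x hx => ?_) hR'
    have : (pdx^[2] u t x - q₂ t x) ^ 2 = c t x ^ 2 := by simp only [hc]; ring
    rw [this]
    have : 0 ≤ 2 * a t x ^ 2 + 2 * (τ * b t x ^ 2) + τ * c t x ^ 2 + 2 * (τ * d t x ^ 2)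
      + 2 * M ^ 2 * τ ^ 2 := by positivity
    linarith
  have b₃ : √τ * √(∫ x in (0:ℝ)..L, (pdx^[3] u t x - q₃ t x) ^ 2) ≤ √R * τ := by
    refine mul_sqrt_integral_le hL.le hτ0.le hτ0.le ((slice (cu 3) t).sub (slice s₃ t)) cη'
      (fun x hx => ?_) hR'
    have h := corr (y := -d t x) (hM₁ t ht x hx) l₁
    have : (pdx^[3] u t x - q₃ t x) ^ 2 = (-d t x + τ * r₁ t x) ^ 2 := by simp only [hd]; ring
    rw [this]
    have : 0 ≤ a t x ^ 2 + τ * b t x ^ 2 + τ * c t x ^ 2 := by positivity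
    linarith
  rw [Real.sqrt_one, one_mul] at b₀
  linarith
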